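/- Let U ⊆ ℝ⁴ be open and let Γ^n_{bm} : ℝ × U → ℝ (n,m,b ∈ Fin 4) be a smooth one-parameter family of connection coefficients, depending smoothly on a parameter λ and on x ∈ U, with curvature R^n_{m ab}(λ,x) = ∂_a Γ^n_{bm} − ∂_b Γ^n_{am} + Σ_l (Γ^n_{al} Γ^l_{bm} − Γ^n_{bl} Γ^l_{am}) (partial derivatives ∂_a taken in x). Then the variation of the Pontryagin density is a total spatial divergence: at every (λ,x), (1/4) Σ_{a,b,c,d} ε̃(a,b,c,d) Σ_{n,m} ∂_λ ( R^n_{m ab} R^m_{n cd} ) = Σ_{a,b,c,d} ε̃(a,b,c,d) ∂_a ( Σ_{n,m} R^m_{n cd} · ∂_λ Γ^n_{bm} ). -/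

import Mathlib

open scoped BigOperators

/-- The Levi-Civita symbol on `Fin 4`: the sign of the permutation sending
`(0,1,2,3)` to `(a,b,c,d)` when the four indices are distinct, and `0` otherwise. -/
noncomputable def leviCivita (a b c d : Fin 4) : ℝ :=
  ∑ σ : Equiv.Perm (Fin 4),
    if σ 0 = a ∧ σ 1 = b ∧ σ 2 = c ∧ σ 3 = d then ((Equiv.Perm.sign σ : ℤ) : ℝ) else 0

/-- Spatial partial derivative (in the `a`-th coordinate direction of `ℝ⁴`) of a
function of a parameter `λ ∈ ℝ` and a point `x ∈ ℝ⁴`. -/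
noncomputable def pdx (a : Fin 4) (f : ℝ × (Fin 4 → ℝ) → ℝ) (p : ℝ × (Fin 4 → ℝ)) : ℝ :=
  fderiv ℝ f p (0, Pi.single a 1)

/-- Derivative with respect to the parameter `λ`. -/
noncomputable def pdLam (f : ℝ × (Fin 4 → ℝ) → ℝ) (p : ℝ × (Fin 4 → ℝ)) : ℝ :=
  fderiv ℝ f p (1, 0)

/-- The curvature `R^n_{m ab}(λ,x)` of a one-parameter family of connection
coefficients `Γ^n_{bm}(λ,x)`, with partial derivatives taken in `x`. -/
noncomputable def curv (Γ : Fin 4 → Fin 4 → Fin 4 → ℝ × (Fin 4 → ℝ) → ℝ)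
    (n m a b : Fin 4) (p : ℝ × (Fin 4 → ℝ)) : ℝ :=
  pdx a (Γ n b m) p - pdx b (Γ n a m) p
    + ∑ l : Fin 4, (Γ n a l p * Γ l b m p - Γ n b l p * Γ l a m p)

theorem sum_lc (f : Fin 4 → Fin 4 → Fin 4 → Fin 4 → ℝ) :
    ∑ a : Fin 4, ∑ b : Fin 4, ∑ c : Fin 4, ∑ d : Fin 4, leviCivita a b c d * f a b c d
      = ∑ σ : Equiv.Perm (Fin 4), ((Equiv.Perm.sign σ : ℤ) : ℝ) * f (σ 0) (σ 1) (σ 2) (σ 3) := by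
  have h : ∀ a b c d, leviCivita a b c d * f a b c d = ∑ σ : Equiv.Perm (Fin 4),
      if σ 0 = a then (if σ 1 = b then (if σ 2 = c then (if σ 3 = d then
        ((Equiv.Perm.sign σ : ℤ) : ℝ) * f a b c d else 0) else 0) else 0) else 0 := by
    intro a b c d
    unfold leviCivita
    rw [Finset.sum_mul]
    refine Finset.sum_congr rfl fun σ _ => ?_
    simp only [ite_and, ite_mul, zero_mul]
  simp only [h]
  simp only [Finset.sum_comm (s := (Finset.univ : Finset (Fin 4))) (t := (Finset.univ : Finset (Equiv.Perm (Fin 4))))]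
  refine Finset.sum_congr rfl fun σ _ => ?_
  simp

theorem perm_sum_reindex (π : Equiv.Perm (Fin 4)) (f : Fin 4 → Fin 4 → Fin 4 → Fin 4 → ℝ) :
    ∑ σ : Equiv.Perm (Fin 4), ((Equiv.Perm.sign σ : ℤ) : ℝ) * f (σ 0) (σ 1) (σ 2) (σ 3)
    = ((Equiv.Perm.sign π : ℤ) : ℝ) * ∑ σ : Equiv.Perm (Fin 4), ((Equiv.Perm.sign σ : ℤ) : ℝ) *
        f (σ (π 0)) (σ (π 1)) (σ (π 2)) (σ (π 3)) := by
  rw [← Equiv.sum_comp (Equiv.mulRight π), Finset.mul_sum]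
  refine Finset.sum_congr rfl fun σ _ => ?_
  simp only [Equiv.coe_mulRight, Equiv.Perm.sign_mul, Equiv.Perm.mul_apply]
  push_cast
  ring

theorem lc_swap (f : Fin 4 → Fin 4 → Fin 4 → Fin 4 → ℝ) :
    ∑ σ : Equiv.Perm (Fin 4), ((Equiv.Perm.sign σ : ℤ) : ℝ) * f (σ 1) (σ 0) (σ 2) (σ 3)
    = - ∑ σ : Equiv.Perm (Fin 4), ((Equiv.Perm.sign σ : ℤ) : ℝ) * f (σ 0) (σ 1) (σ 2) (σ 3) := by
  have h := perm_sum_reindex (Equiv.swap 0 1) f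
  have e : Equiv.Perm.sign (Equiv.swap (0 : Fin 4) 1) = -1 := by decide
  have e2 : (Equiv.swap (0 : Fin 4) 1) 2 = 2 := by decide
  have e3 : (Equiv.swap (0 : Fin 4) 1) 3 = 3 := by decide
  rw [e, e2, e3, Equiv.swap_apply_left, Equiv.swap_apply_right] at h
  rw [h]; simp

theorem lc_pair (f : Fin 4 → Fin 4 → Fin 4 → Fin 4 → ℝ) :
    ∑ σ : Equiv.Perm (Fin 4), ((Equiv.Perm.sign σ : ℤ) : ℝ) * f (σ 2) (σ 3) (σ 0) (σ 1)
    = ∑ σ : Equiv.Perm (Fin 4), ((Equiv.Perm.sign σ : ℤ) : ℝ) * f (σ 0) (σ 1) (σ 2) (σ 3) := by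
  have h := perm_sum_reindex (Equiv.swap 0 2 * Equiv.swap 1 3) f
  have e : Equiv.Perm.sign (Equiv.swap (0 : Fin 4) 2 * Equiv.swap 1 3) = 1 := by decide
  have e0 : (Equiv.swap (0 : Fin 4) 2 * Equiv.swap 1 3 : Equiv.Perm (Fin 4)) 0 = 2 := by decide
  have e1 : (Equiv.swap (0 : Fin 4) 2 * Equiv.swap 1 3 : Equiv.Perm (Fin 4)) 1 = 3 := by decide
  have e2 : (Equiv.swap (0 : Fin 4) 2 * Equiv.swap 1 3 : Equiv.Perm (Fin 4)) 2 = 0 := by decide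
  have e3 : (Equiv.swap (0 : Fin 4) 2 * Equiv.swap 1 3 : Equiv.Perm (Fin 4)) 3 = 1 := by decide
  rw [e, e0, e1, e2, e3] at h
  rw [h]; simp

theorem lc_cyc (f : Fin 4 → Fin 4 → Fin 4 → Fin 4 → ℝ) :
    ∑ σ : Equiv.Perm (Fin 4), ((Equiv.Perm.sign σ : ℤ) : ℝ) * f (σ 2) (σ 1) (σ 3) (σ 0)
    = ∑ σ : Equiv.Perm (Fin 4), ((Equiv.Perm.sign σ : ℤ) : ℝ) * f (σ 0) (σ 1) (σ 2) (σ 3) := by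
  have h := perm_sum_reindex (Equiv.swap 0 2 * Equiv.swap 2 3) f
  have e : Equiv.Perm.sign (Equiv.swap (0 : Fin 4) 2 * Equiv.swap 2 3) = 1 := by decide
  have e0 : (Equiv.swap (0 : Fin 4) 2 * Equiv.swap 2 3 : Equiv.Perm (Fin 4)) 0 = 2 := by decide
  have e1 : (Equiv.swap (0 : Fin 4) 2 * Equiv.swap 2 3 : Equiv.Perm (Fin 4)) 1 = 1 := by decide
  have e2 : (Equiv.swap (0 : Fin 4) 2 * Equiv.swap 2 3 : Equiv.Perm (Fin 4)) 2 = 3 := by decide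
  have e3 : (Equiv.swap (0 : Fin 4) 2 * Equiv.swap 2 3 : Equiv.Perm (Fin 4)) 3 = 0 := by decide
  rw [e, e0, e1, e2, e3] at h
  rw [h]; simp

/-- The purely algebraic core. -/
theorem alg_core (G L : Fin 4 → Matrix (Fin 4) (Fin 4) ℝ)
    (dG dL : Fin 4 → Fin 4 → Matrix (Fin 4) (Fin 4) ℝ)
    (H : Fin 4 → Fin 4 → Fin 4 → Matrix (Fin 4) (Fin 4) ℝ)
    (hH : ∀ a b c, H a b c = H b a c)
    (R lR : Fin 4 → Fin 4 → Matrix (Fin 4) (Fin 4) ℝ)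
    (dR : Fin 4 → Fin 4 → Fin 4 → Matrix (Fin 4) (Fin 4) ℝ)
    (hR : ∀ a b, R a b = dG a b - dG b a + (G a * G b - G b * G a))
    (hlR : ∀ a b, lR a b = dL a b - dL b a
      + (L a * G b + G a * L b - (L b * G a + G b * L a)))
    (hdR : ∀ e a b, dR e a b = H e a b - H e b a
      + (dG e a * G b + G a * dG e b - (dG e b * G a + G b * dG e a))) :
    (1/4) * ∑ σ : Equiv.Perm (Fin 4), ((Equiv.Perm.sign σ : ℤ) : ℝ) *
        ((lR (σ 0) (σ 1) * R (σ 2) (σ 3)).trace + (R (σ 0) (σ 1) * lR (σ 2) (σ 3)).trace)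
      = ∑ σ : Equiv.Perm (Fin 4), ((Equiv.Perm.sign σ : ℤ) : ℝ) *
        ((dR (σ 0) (σ 2) (σ 3) * L (σ 1)).trace + (R (σ 2) (σ 3) * dL (σ 0) (σ 1)).trace) := by
  have h1 : ∑ σ : Equiv.Perm (Fin 4), ((Equiv.Perm.sign σ : ℤ) : ℝ) *
        (R (σ 0) (σ 1) * lR (σ 2) (σ 3)).trace
      = ∑ σ : Equiv.Perm (Fin 4), ((Equiv.Perm.sign σ : ℤ) : ℝ) *
        (lR (σ 0) (σ 1) * R (σ 2) (σ 3)).trace := by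
    rw [← lc_pair (fun a b c d => (lR a b * R c d).trace)]
    simp only [Matrix.trace_mul_comm (lR _ _)]
  let X : Fin 4 → Fin 4 → Matrix (Fin 4) (Fin 4) ℝ := fun a b =>
    dL a b + (G a * L b - L b * G a)
  have hX : ∀ a b, lR a b = X a b - X b a := by
    intro a b; rw [hlR]; simp only [X]; abel
  have h2 : ∑ σ : Equiv.Perm (Fin 4), ((Equiv.Perm.sign σ : ℤ) : ℝ) *
        (lR (σ 0) (σ 1) * R (σ 2) (σ 3)).trace
      = 2 * ∑ σ : Equiv.Perm (Fin 4), ((Equiv.Perm.sign σ : ℤ) : ℝ) *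
        (X (σ 0) (σ 1) * R (σ 2) (σ 3)).trace := by
    have := lc_swap (fun a b c d => (X a b * R c d).trace)
    simp only [hX, Matrix.sub_mul, Matrix.trace_sub, mul_sub, Finset.sum_sub_distrib]
    rw [this]; ring
  let B : Fin 4 → Fin 4 → Fin 4 → Matrix (Fin 4) (Fin 4) ℝ := fun a c d =>
    dR a c d + (G a * R c d - R c d * G a)
  have bianchi : ∀ a c d, B a c d + B c d a + B d a c = 0 := by
    intro a c d
    simp only [B, hdR, hR]
    rw [hH c a d, hH d a c, hH d c a]
    noncomm_ring
  have h3 : ∑ σ : Equiv.Perm (Fin 4), ((Equiv.Perm.sign σ : ℤ) : ℝ) *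
        (B (σ 0) (σ 2) (σ 3) * L (σ 1)).trace = 0 := by
    have c1 := lc_cyc (fun a b c d => (B a c d * L b).trace)
    have c2 := lc_cyc (fun a b c d => (B c d a * L b).trace)
    have s : ∑ σ : Equiv.Perm (Fin 4), ((Equiv.Perm.sign σ : ℤ) : ℝ) *
        ((B (σ 0) (σ 2) (σ 3) + B (σ 2) (σ 3) (σ 0) + B (σ 3) (σ 0) (σ 2)) * L (σ 1)).trace = 0 := by
      simp [bianchi]
    simp only [Matrix.add_mul, Matrix.trace_add, mul_add, Finset.sum_add_distrib] at s
    linarith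
  have h4 : ∀ a b c d, (X a b * R c d).trace = (dR a c d * L b).trace + (R c d * dL a b).trace
      - (B a c d * L b).trace := by
    intro a b c d
    simp only [X, B, Matrix.add_mul, Matrix.sub_mul, Matrix.trace_add, Matrix.trace_sub]
    rw [Matrix.trace_mul_comm (dL a b), Matrix.trace_mul_cycle (G a) (L b),
      Matrix.trace_mul_cycle (L b) (G a), Matrix.trace_mul_cycle (R c d) (G a)]
    have : (R c d * G a * L b).trace = (L b * R c d * G a).trace := Matrix.trace_mul_cycle _ _ _
    have : (G a * R c d * L b).trace = (L b * G a * R c d).trace := Matrix.trace_mul_cycle _ _ _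
    have : (R c d * L b * G a).trace = (G a * R c d * L b).trace := Matrix.trace_mul_cycle _ _ _
    linarith
  have h5 : ∑ σ : Equiv.Perm (Fin 4), ((Equiv.Perm.sign σ : ℤ) : ℝ) *
        (X (σ 0) (σ 1) * R (σ 2) (σ 3)).trace =
      ∑ σ : Equiv.Perm (Fin 4), ((Equiv.Perm.sign σ : ℤ) : ℝ) *
        ((dR (σ 0) (σ 2) (σ 3) * L (σ 1)).trace + (R (σ 2) (σ 3) * dL (σ 0) (σ 1)).trace) := by
    simp only [h4, mul_sub, Finset.sum_sub_distrib, h3, sub_zero]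
  rw [← h5]
  simp only [mul_add, Finset.sum_add_distrib]
  rw [h1, h2]; ring

theorem cd_dir {f : ℝ × (Fin 4 → ℝ) → ℝ} {p : ℝ × (Fin 4 → ℝ)}
    (hf : ContDiffAt ℝ (⊤ : ℕ∞) f p) (v : ℝ × (Fin 4 → ℝ)) :
    DifferentiableAt ℝ (fun q => fderiv ℝ f q v) p := by
  have h : ContDiffAt ℝ 1 (fderiv ℝ f) p := hf.fderiv_right (by norm_cast)
  exact (h.differentiableAt (by norm_num)).clm_apply (differentiableAt_const v)

theorem fderiv_dir_symm {f : ℝ × (Fin 4 → ℝ) → ℝ} {p : ℝ × (Fin 4 → ℝ)}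
    (hf : ContDiffAt ℝ (⊤ : ℕ∞) f p) (v w : ℝ × (Fin 4 → ℝ)) :
    fderiv ℝ (fun q => fderiv ℝ f q v) p w = fderiv ℝ (fun q => fderiv ℝ f q w) p v := by
  have h : ContDiffAt ℝ 1 (fderiv ℝ f) p := hf.fderiv_right (by norm_cast)
  have hd := h.differentiableAt (by norm_num)
  have hs : IsSymmSndFDerivAt ℝ f p := hf.isSymmSndFDerivAt (by simp only [minSmoothness_of_isRCLikeNormedField]; norm_cast)
  rw [fderiv_clm_apply hd (differentiableAt_const v), fderiv_clm_apply hd (differentiableAt_const w)]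
  simpa using hs.eq w v

theorem curv_hasFDerivAt (Γ : Fin 4 → Fin 4 → Fin 4 → ℝ × (Fin 4 → ℝ) → ℝ)
    (p : ℝ × (Fin 4 → ℝ)) (hΓ : ∀ n b m : Fin 4, ContDiffAt ℝ (⊤ : ℕ∞) (Γ n b m) p)
    (n m a b : Fin 4) :
    HasFDerivAt (curv Γ n m a b)
      (fderiv ℝ (pdx a (Γ n b m)) p - fderiv ℝ (pdx b (Γ n a m)) p
        + ∑ l : Fin 4, ((Γ n a l p • fderiv ℝ (Γ l b m) p + Γ l b m p • fderiv ℝ (Γ n a l) p)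
          - (Γ n b l p • fderiv ℝ (Γ l a m) p + Γ l a m p • fderiv ℝ (Γ n b l) p))) p := by
  have d1 : ∀ n b m, HasFDerivAt (Γ n b m) (fderiv ℝ (Γ n b m) p) p := fun n b m =>
    ((hΓ n b m).differentiableAt (by simp)).hasFDerivAt
  have d2 : ∀ a n b m, HasFDerivAt (pdx a (Γ n b m)) (fderiv ℝ (pdx a (Γ n b m)) p) p :=
    fun a n b m => (cd_dir (hΓ n b m) _).hasFDerivAt
  exact ((d2 _ _ _ _).sub (d2 _ _ _ _)).add
    (HasFDerivAt.fun_sum fun l _ => ((d1 _ _ _).mul (d1 _ _ _)).sub ((d1 _ _ _).mul (d1 _ _ _)))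

/-- The variation (derivative in the parameter `λ`) of the Pontryagin density is a
total spatial divergence:
`(1/4) ε̃(a,b,c,d) ∂_λ(R^n_{m ab} R^m_{n cd}) = ε̃(a,b,c,d) ∂_a(R^m_{n cd} ∂_λ Γ^n_{bm})`. -/
theorem variation_of_pontryagin_is_total_divergence
    (U : Set (Fin 4 → ℝ)) (hU : IsOpen U)
    (Γ : Fin 4 → Fin 4 → Fin 4 → ℝ × (Fin 4 → ℝ) → ℝ)
    (hΓ : ∀ n b m : Fin 4, ContDiffOn ℝ (⊤ : ℕ∞) (Γ n b m) (Set.univ ×ˢ U)) :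
    ∀ p : ℝ × (Fin 4 → ℝ), p.2 ∈ U →
      (1/4) * ∑ a : Fin 4, ∑ b : Fin 4, ∑ c : Fin 4, ∑ d : Fin 4,
          leviCivita a b c d *
            ∑ n : Fin 4, ∑ m : Fin 4,
              pdLam (fun q => curv Γ n m a b q * curv Γ m n c d q) p
        = ∑ a : Fin 4, ∑ b : Fin 4, ∑ c : Fin 4, ∑ d : Fin 4,
            leviCivita a b c d *
              pdx a (fun q => ∑ n : Fin 4, ∑ m : Fin 4,
                curv Γ m n c d q * pdLam (Γ n b m) q) p := by
  intro p hp
  have hC : ∀ n b m : Fin 4, ContDiffAt ℝ (⊤ : ℕ∞) (Γ n b m) p := fun n b m =>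
    (hΓ n b m).contDiffAt ((isOpen_univ.prod hU).mem_nhds ⟨trivial, hp⟩)
  have hK := curv_hasFDerivAt Γ p hC
  have hdl : ∀ n b m, DifferentiableAt ℝ (pdLam (Γ n b m)) p := fun n b m => cd_dir (hC n b m) _
  have hsymx : ∀ a e n b m, pdx e (pdx a (Γ n b m)) p = pdx a (pdx e (Γ n b m)) p :=
    fun a e n b m => fderiv_dir_symm (hC n b m) _ _
  have hsyml : ∀ a n b m, pdLam (pdx a (Γ n b m)) p = pdx a (pdLam (Γ n b m)) p :=
    fun a n b m => fderiv_dir_symm (hC n b m) _ _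
  have core := alg_core
    (fun b => Matrix.of fun n m => Γ n b m p)
    (fun b => Matrix.of fun n m => pdLam (Γ n b m) p)
    (fun a b => Matrix.of fun n m => pdx a (Γ n b m) p)
    (fun a b => Matrix.of fun n m => pdx a (pdLam (Γ n b m)) p)
    (fun e a b => Matrix.of fun n m => pdx e (pdx a (Γ n b m)) p)
    (by intro a b c; ext n m; exact hsymx _ _ _ _ _)
    (fun a b => Matrix.of fun n m => curv Γ n m a b p)
    (fun a b => Matrix.of fun n m => pdLam (curv Γ n m a b) p)
    (fun e a b => Matrix.of fun n m => pdx e (curv Γ n m a b) p)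
    (by
      intro a b; ext n m
      simp [Matrix.mul_apply, curv, Finset.sum_sub_distrib])
    (by
      intro a b; ext n m
      have : pdLam (curv Γ n m a b) p = _ := congrArg (fun T => T (1, 0)) (hK n m a b).fderiv
      simp only [Matrix.of_apply, Matrix.add_apply, Matrix.sub_apply, Matrix.mul_apply]
      rw [this, ← hsyml, ← hsyml]
      simp only [pdLam, ContinuousLinearMap.add_apply, ContinuousLinearMap.sub_apply,
        ContinuousLinearMap.sum_apply, ContinuousLinearMap.smul_apply, smul_eq_mul,
        ← Finset.sum_add_distrib, ← Finset.sum_sub_distrib]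
      congr 1
      refine Finset.sum_congr rfl fun l _ => ?_
      ring)
    (by
      intro e a b; ext n m
      have : pdx e (curv Γ n m a b) p = _ :=
        congrArg (fun T => T (0, Pi.single e 1)) (hK n m a b).fderiv
      simp only [Matrix.of_apply, Matrix.add_apply, Matrix.sub_apply, Matrix.mul_apply]
      rw [this]
      simp only [ContinuousLinearMap.add_apply, ContinuousLinearMap.sub_apply,
        ContinuousLinearMap.sum_apply, ContinuousLinearMap.smul_apply, smul_eq_mul,
        ← Finset.sum_add_distrib, ← Finset.sum_sub_distrib]
      simp only [pdx]
      congr 1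
      refine Finset.sum_congr rfl fun l _ => ?_
      ring)
  have e1 : ∀ a b c d n m, pdLam (fun q => curv Γ n m a b q * curv Γ m n c d q) p
      = pdLam (curv Γ n m a b) p * curv Γ m n c d p
        + curv Γ n m a b p * pdLam (curv Γ m n c d) p := by
    intro a b c d n m
    have := congrArg (fun T => T (1, 0)) ((hK n m a b).mul (hK m n c d)).fderiv
    simp only [← (hK _ _ _ _).fderiv] at this
    refine Eq.trans this ?_
    simp only [ContinuousLinearMap.add_apply, ContinuousLinearMap.smul_apply, smul_eq_mul, pdLam]
    ring
  have e2 : ∀ a b c d, pdx a (fun q => ∑ n : Fin 4, ∑ m : Fin 4,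
                curv Γ m n c d q * pdLam (Γ n b m) q) p
      = ∑ n : Fin 4, ∑ m : Fin 4, (pdx a (curv Γ m n c d) p * pdLam (Γ n b m) p
        + curv Γ m n c d p * pdx a (pdLam (Γ n b m)) p) := by
    intro a b c d
    have h : HasFDerivAt (fun q => ∑ n : Fin 4, ∑ m : Fin 4,
                curv Γ m n c d q * pdLam (Γ n b m) q) _ p :=
      HasFDerivAt.fun_sum fun n _ => HasFDerivAt.fun_sum fun m _ =>
        (hK m n c d).mul (hdl n b m).hasFDerivAt
    have := congrArg (fun T => T (0, Pi.single a 1)) h.fderiv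
    simp only [← (hK _ _ _ _).fderiv] at this
    refine Eq.trans this ?_
    simp only [ContinuousLinearMap.add_apply, ContinuousLinearMap.smul_apply, smul_eq_mul,
      ContinuousLinearMap.sum_apply, pdx]
    refine Finset.sum_congr rfl fun n _ => Finset.sum_congr rfl fun m _ => ?_
    ring
  simp only [e1, e2]
  rw [sum_lc (fun a b c d => ∑ n : Fin 4, ∑ m : Fin 4,
      (pdLam (curv Γ n m a b) p * curv Γ m n c d p
        + curv Γ n m a b p * pdLam (curv Γ m n c d) p)),
    sum_lc (fun a b c d => ∑ n : Fin 4, ∑ m : Fin 4,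
      (pdx a (curv Γ m n c d) p * pdLam (Γ n b m) p
        + curv Γ m n c d p * pdx a (pdLam (Γ n b m)) p))]
  simp only [Matrix.trace, Matrix.diag_apply, Matrix.mul_apply, Matrix.of_apply,
    ← Finset.sum_add_distrib] at core
  rw [core]
  refine Finset.sum_congr rfl fun σ _ => ?_
  rw [Finset.sum_comm]
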